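/- Let s_1, …, s_n and t be positive integers. There exists a finite graph G with a list assignment L in which every list has size three, and distinct vertices v_1, …, v_n of G (let S = {v_1, …, v_n}), such that: (1) |V(G)| < 11n(t+2); (2) a set R ⊆ {1,…,n} is S-realizable if and only if Σ_{i∈R} s_i ≤ t; and (3) every weighted request w for G and L satisfying w(v,1) = 0 for all v ∈ S is 1/4-satisfiable. -/

import Mathlib

def IsLColoring {V : Type*} (G : SimpleGraph V) (L : V → Finset ℕ) (φ : V → ℕ) : Prop :=
  (∀ v, φ v ∈ L v) ∧ ∀ ⦃u w : V⦄, G.Adj u w → φ u ≠ φ w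

def WeightTotal {V : Type*} [Fintype V] (L : V → Finset ℕ) (w : V → ℕ → ℝ) : ℝ :=
  ∑ v, ∑ c ∈ L v, w v c

def WEpsSat {V : Type*} [Fintype V] (G : SimpleGraph V) (L : V → Finset ℕ)
    (w : V → ℕ → ℝ) (ε : ℝ) : Prop :=
  ∃ φ : V → ℕ, IsLColoring G L φ ∧ ε * WeightTotal L w ≤ ∑ v, w v (φ v)

def WFlexible {V : Type*} [Fintype V] (G : SimpleGraph V) (L : V → Finset ℕ) (ε : ℝ) : Prop :=
  ∀ w : V → ℕ → ℝ, (∀ v c, 0 ≤ w v c) → WEpsSat G L w ε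

inductive EE (n t : ℕ) (s : Fin n → ℕ) :
    Fin n × Fin (t+1) × Fin 6 → Fin n × Fin (t+1) × Fin 6 → Prop
  | e1 (i : Fin n) (k : Fin (t+1)) : 0 < k.val → EE n t s (i,k,0) (i,k,1)
  | e2 (i : Fin n) (k : Fin (t+1)) : 0 < k.val → EE n t s (i,k,0) (i,k,2)
  | e3 (i : Fin n) (k : Fin (t+1)) : EE n t s (i,k,1) (i,k,2)
  | e4 (i i' : Fin n) (k : Fin (t+1)) : i'.val + 1 = i.val → 0 < k.val → EE n t s (i',k,0) (i,k,1)
  | e5 (i i' : Fin n) (k : Fin (t+1)) : i'.val + 1 = i.val → 0 < k.val → EE n t s (i',k,0) (i,k,2)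
  | f1 (i : Fin n) (k : Fin (t+1)) : EE n t s (i,k,3) (i,k,4)
  | f2 (i : Fin n) (k k' : Fin (t+1)) : k.val + s i = k'.val → 0 < k'.val → EE n t s (i,k',0) (i,k,3)
  | f3 (i : Fin n) (k k' : Fin (t+1)) : k.val + s i = k'.val → 0 < k'.val → EE n t s (i,k',0) (i,k,4)
  | g1 (i : Fin n) (k : Fin (t+1)) : t < k.val + s i → EE n t s (i,k,5) (i,k,3)
  | g2 (i : Fin n) (k : Fin (t+1)) : t < k.val + s i → EE n t s (i,k,5) (i,k,4)
  | g3 (i : Fin n) (k k0 : Fin (t+1)) : k0.val = 0 → EE n t s (i,k0,0) (i,k,5)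
  | h1 (i : Fin n) (k k0 : Fin (t+1)) : k0.val = 0 → EE n t s (i,k0,0) (i,k,4)
  | h2 (i : Fin n) (k0 : Fin (t+1)) : k0.val = 0 → EE n t s (i,k0,0) (i,k0,3)
  | h3 (i i' : Fin n) (k : Fin (t+1)) : i'.val + 1 = i.val → 0 < k.val → EE n t s (i',k,0) (i,k,3)

def GG (n t : ℕ) (s : Fin n → ℕ) : SimpleGraph (Fin n × Fin (t+1) × Fin 6) where
  Adj u v := EE n t s u v ∨ EE n t s v u
  symm := ⟨fun _ _ h => h.symm⟩
  loopless := ⟨by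
    intro u h
    have key : ∀ u v, EE n t s u v → u ≠ v := by
      intro u v h
      cases h <;> simp [Prod.ext_iff]
    rcases h with h | h <;> exact key _ _ h rfl⟩

def LL (n t : ℕ) (x : Fin n × Fin (t+1) × Fin 6) : Finset ℕ :=
  if x.2.1.val = 0 ∧ x.2.2 = 0 then {1,2,3} else {1, 2 * x.1.val + 4, 2 * x.1.val + 5}

lemma isL {n t : ℕ} {s : Fin n → ℕ} {φ : Fin n × Fin (t+1) × Fin 6 → ℕ}
    (h1 : ∀ x, φ x ∈ LL n t x) (h2 : ∀ u v, EE n t s u v → φ u ≠ φ v) :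
    IsLColoring (GG n t s) (LL n t) φ := by
  refine ⟨h1, ?_⟩
  rintro u v (h | h)
  · exact h2 _ _ h
  · exact (h2 _ _ h).symm

def pre {n : ℕ} (s : Fin n → ℕ) (R : Finset (Fin n)) (i : ℕ) : ℕ :=
  ∑ j ∈ R, if j.val < i then s j else 0

lemma pre_zero {n : ℕ} (s : Fin n → ℕ) (R : Finset (Fin n)) : pre s R 0 = 0 := by
  simp [pre]

lemma pre_last {n : ℕ} (s : Fin n → ℕ) (R : Finset (Fin n)) : pre s R n = ∑ i ∈ R, s i := by
  simp [pre]

lemma pre_le {n : ℕ} (s : Fin n → ℕ) (R : Finset (Fin n)) (i : ℕ) :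
    pre s R i ≤ ∑ i ∈ R, s i := by
  unfold pre
  apply Finset.sum_le_sum
  intro j _
  split_ifs <;> omega

lemma pre_succ {n : ℕ} (s : Fin n → ℕ) (R : Finset (Fin n)) (i : Fin n) :
    pre s R (i.val + 1) = pre s R i.val + if i ∈ R then s i else 0 := by
  unfold pre
  rw [← Finset.sum_ite_eq' R i s, ← Finset.sum_add_distrib]
  apply Finset.sum_congr rfl
  intro j _
  by_cases h : j = i
  · subst h; simp
  · have : j.val ≠ i.val := fun h' => h (Fin.ext h')
    simp only [h, if_false]
    split_ifs <;> omega

def psi {n t : ℕ} (s : Fin n → ℕ) (R : Finset (Fin n)) (x : Fin n × Fin (t+1) × Fin 6) : ℕ :=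
  let i := x.1
  let k := x.2.1.val
  let a := 2 * i.val + 4
  let b := 2 * i.val + 5
  let src : Prop := (k = 0 → i ∈ R) ∧ k ≤ pre s R i.val
  let y : Prop := k + s i ≤ pre s R (i.val + 1)
  match x.2.2 with
  | 0 => if k = 0 then (if i ∈ R then 1 else 2) else if k ≤ pre s R (i.val+1) then 1 else a
  | 1 => if k ≤ pre s R (i.val+1) then a else 1
  | 2 => b
  | 3 => if y then a else if src then b else 1
  | 4 => if y then b else if src then 1 else b
  | 5 => a

lemma psi_ok {n t : ℕ} (s : Fin n → ℕ) (R : Finset (Fin n)) (hs : ∀ i, 0 < s i)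
    (hR : ∑ i ∈ R, s i ≤ t) : IsLColoring (GG n t s) (LL n t) (psi s R) := by
  apply isL
  · rintro ⟨i, k, c⟩
    unfold LL psi
    fin_cases c <;> simp <;> split_ifs <;> simp <;> grind
  · intro u v h
    have hle := fun i => (pre_le s R i).trans hR
    have hsucc := pre_succ s R
    cases h with
    | e1 i k h => simp only [psi]; split_ifs <;> omega
    | e2 i k h => simp only [psi]; split_ifs <;> omega
    | e3 i k => simp only [psi]; split_ifs <;> omega
    | e4 i i' k h h' =>
      have := hsucc i
      simp only [psi]; rw [h]; split_ifs at * <;> omega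
    | e5 i i' k h h' => simp only [psi]; split_ifs <;> omega
    | f1 i k => simp only [psi]; split_ifs <;> omega
    | f2 i k k' h h' => simp only [psi]; rw [h]; split_ifs <;> omega
    | f3 i k k' h h' => simp only [psi]; rw [h]; split_ifs <;> omega
    | g1 i k h => have := hle (i.val+1); simp only [psi]; split_ifs <;> omega
    | g2 i k h => have := hle (i.val+1); simp only [psi]; split_ifs <;> omega
    | g3 i k k0 h => simp only [psi]; split_ifs <;> omega
    | h1 i k k0 h =>
      have := hsucc i
      simp only [psi]; split_ifs at * <;> omega
    | h2 i k0 h =>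
      have := hsucc i
      by_cases hi : i ∈ R <;> simp [psi, h, hi] at * <;> split_ifs <;> omega
    | h3 i i' k h h' =>
      have := hsucc i
      have hk : k.val ≠ 0 := by omega
      simp only [psi, h, hk, false_imp_iff, true_and, if_false]
      split_ifs at * <;> omega

def rho {n t : ℕ} (j : ℕ) (x : Fin n × Fin (t+1) × Fin 6) : ℕ :=
  let c := fun r : ℕ => if r % 3 = 0 then 1 else if r % 3 = 1 then 2 * x.1.val + 4 else 2 * x.1.val + 5
  match x.2.2 with
  | 0 => if x.2.1.val = 0 then (if j = 0 then 2 else 3) else c j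
  | 1 => c (j+1)
  | 2 => c (j+2)
  | 3 => c (j+1)
  | 4 => c (j+2)
  | 5 => c j

lemma rho_ok {n t : ℕ} (s : Fin n → ℕ) (j : ℕ) (hj : j < 3) :
    IsLColoring (GG n t s) (LL n t) (rho j) := by
  apply isL
  · rintro ⟨i, k, c⟩
    unfold LL rho
    fin_cases c <;> simp <;> split_ifs <;> simp <;> omega
  · intro u v h
    cases h <;> simp only [rho] <;> split_ifs <;> omega

lemma rho_sum {n t : ℕ} (w : Fin n × Fin (t+1) × Fin 6 → ℕ → ℝ) (h0 : ∀ x c, 0 ≤ w x c)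
    (h1 : ∀ i, w (i,0,0) 1 = 0) (x : Fin n × Fin (t+1) × Fin 6) :
    ∑ c ∈ LL n t x, w x c ≤ w x (rho 0 x) + w x (rho 1 x) + w x (rho 2 x) := by
  obtain ⟨i, k, c⟩ := x
  by_cases hk : k.val = 0 ∧ c = 0
  · obtain ⟨hk, rfl⟩ := hk
    have hk0 : k = 0 := Fin.ext hk
    subst hk0
    simp [LL, rho, h1]
    linarith [h0 (i,0,0) 3]
  · have : LL n t (i,k,c) = {1, 2 * i.val + 4, 2 * i.val + 5} := by
      simp only [LL]; rw [if_neg hk]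
    rw [this, Finset.sum_insert (by simp), Finset.sum_insert (by simp), Finset.sum_singleton]
    fin_cases c <;> simp [rho] <;> (try simp at hk) <;> (try simp [hk]) <;> linarith

lemma flex {n t : ℕ} (s : Fin n → ℕ) (w : Fin n × Fin (t+1) × Fin 6 → ℕ → ℝ)
    (h0 : ∀ x c, 0 ≤ w x c) (h1 : ∀ i, w (i,0,0) 1 = 0) :
    WEpsSat (GG n t s) (LL n t) w (1/4) := by
  have hsum : WeightTotal (LL n t) w ≤ ∑ x, w x (rho 0 x) + ∑ x, w x (rho 1 x) + ∑ x, w x (rho 2 x) := by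
    rw [← Finset.sum_add_distrib, ← Finset.sum_add_distrib]
    exact Finset.sum_le_sum fun x _ => rho_sum w h0 h1 x
  have hnn : 0 ≤ WeightTotal (LL n t) w :=
    Finset.sum_nonneg fun x _ => Finset.sum_nonneg fun c _ => h0 x c
  by_contra hc
  have key : ∀ j < 3, ∑ x, w x (rho j x) < 1/4 * WeightTotal (LL n t) w := by
    intro j hj
    by_contra h
    exact hc ⟨rho j, rho_ok s j hj, not_lt.mp h⟩
  linarith [key 0 (by norm_num), key 1 (by norm_num), key 2 (by norm_num)]

lemma tri {i x p q : ℕ} (hx : x ∈ ({1, 2*i+4, 2*i+5} : Finset ℕ))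
    (hp : p ∈ ({1, 2*i+4, 2*i+5} : Finset ℕ)) (hq : q ∈ ({1, 2*i+4, 2*i+5} : Finset ℕ))
    (h1 : x ≠ p) (h2 : x ≠ q) (h3 : p ≠ q) (hp1 : 1 ≠ p) (hq1 : 1 ≠ q) : x = 1 := by
  simp at hx hp hq; omega

lemma memL {n t : ℕ} {x : Fin n × Fin (t+1) × Fin 6} {c : ℕ} (h : c ∈ LL n t x)
    (hx : 0 < x.2.1.val ∨ x.2.2 ≠ 0) : c ∈ ({1, 2 * x.1.val + 4, 2 * x.1.val + 5} : Finset ℕ) := by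
  unfold LL at h
  rwa [if_neg] at h
  rintro ⟨h1, h2⟩
  rcases hx with hx | hx
  · omega
  · exact hx h2

lemma forward {n t : ℕ} (s : Fin n → ℕ) (R : Finset (Fin n)) (hs : ∀ i, 0 < s i)
    (φ : Fin n × Fin (t+1) × Fin 6 → ℕ) (hφ : IsLColoring (GG n t s) (LL n t) φ)
    (hR : ∀ i, φ (i,0,0) = 1 ↔ i ∈ R) : ∑ i ∈ R, s i ≤ t := by
  have adj : ∀ {u v}, EE n t s u v → φ u ≠ φ v := fun h => hφ.2 (Or.inl h)
  have main : ∀ m, m ≤ n → ∃ h : pre s R m < t + 1, 0 < pre s R m →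
      ∀ i : Fin n, i.val + 1 = m → φ (i, ⟨pre s R m, h⟩, 0) = 1 := by
    intro m
    induction m with
    | zero => intro _; refine ⟨by simp [pre_zero], fun h => by simp [pre_zero] at h⟩
    | succ m ih =>
      intro hm
      obtain ⟨hlt, ih⟩ := ih (by omega)
      obtain ⟨i, rfl⟩ : ∃ i : Fin n, i.val = m := ⟨⟨m, hm⟩, rfl⟩
      have hS := pre_succ s R i
      by_cases hiR : i ∈ R
      · rw [if_pos hiR] at hS
        have hv : φ (i,0,0) = 1 := (hR i).2 hiR
        set k : Fin (t+1) := ⟨pre s R i.val, hlt⟩ with hk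
        have hp : 1 ≠ φ (i,k,3) := by
          by_cases hk0 : k.val = 0
          · have : k = 0 := Fin.ext hk0
            rw [this]
            exact fun h' => adj (.h2 i 0 rfl) (hv.trans h')
          · have hm0 : i.val ≠ 0 := by
              intro h0
              apply hk0
              simp only [hk, h0, pre_zero]
            have h := ih (Nat.pos_of_ne_zero hk0) ⟨i.val-1, by omega⟩ (by simp; omega)
            exact fun h' => adj (.h3 i ⟨i.val-1, by omega⟩ k (by simp only; omega) (Nat.pos_of_ne_zero hk0)) (h.trans h')
        have hq : 1 ≠ φ (i,k,4) := by
          exact fun h' => adj (.h1 i k 0 rfl) (hv.trans h')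
        have hpm := memL (hφ.1 (i,k,3)) (by right; simp)
        have hqm := memL (hφ.1 (i,k,4)) (by right; simp)
        have hpq := adj (.f1 i k)
        have hsi := hs i
        by_cases hle : pre s R i.val + s i ≤ t
        · refine ⟨by omega, ?_⟩
          intro hpos i' hi'
          obtain rfl : i = i' := Fin.ext (by omega)
          exact tri (memL (hφ.1 _) (Or.inl hpos)) hpm hqm (adj (.f2 _ _ _ hS.symm hpos))
            (adj (.f3 _ _ _ hS.symm hpos)) hpq hp hq
        · exfalso
          have hr : φ (i,0,0) ≠ φ (i,k,5) := adj (.g3 i k 0 rfl)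
          have hg : t < k.val + s i := by simp [hk]; omega
          have := tri (memL (hφ.1 (i,k,5)) (by right; simp)) hpm hqm (adj (.g1 i k hg))
            (adj (.g2 i k hg)) hpq hp hq
          rw [hv, this] at hr
          exact hr rfl
      · rw [if_neg hiR, add_zero] at hS
        refine ⟨by omega, ?_⟩
        intro hpos i' hi'
        obtain rfl : i = i' := Fin.ext (by omega)
        have hm0 : i.val ≠ 0 := by
          intro h0
          rw [hS, h0, pre_zero] at hpos
          omega
        have h := ih (by omega) ⟨i.val-1, by omega⟩ (by simp; omega)
        have hkk : (⟨pre s R (i.val+1), by omega⟩ : Fin (t+1)) = ⟨pre s R i.val, hlt⟩ := Fin.ext hS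
        rw [hkk]
        rw [hS] at hpos
        have hi1 : i.val - 1 + 1 = i.val := by omega
        have hm1 := memL (hφ.1 (i,⟨pre s R i.val, hlt⟩,1)) (by right; simp)
        have hm2 := memL (hφ.1 (i,⟨pre s R i.val, hlt⟩,2)) (by right; simp)
        refine tri (memL (hφ.1 _) (Or.inl hpos)) hm1 hm2 (adj (.e1 _ _ hpos)) (adj (.e2 _ _ hpos))
          (adj (.e3 _ _)) ?_ ?_
        · exact fun h' => adj (.e4 _ _ _ hi1 hpos) (h.trans h')
        · exact fun h' => adj (.e5 _ _ _ hi1 hpos) (h.trans h')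
  obtain ⟨h, _⟩ := main n le_rfl
  rw [pre_last] at h
  omega

theorem stmt7 (n t : ℕ) (hn : 0 < n) (ht : 0 < t)
    (s : Fin n → ℕ) (hs : ∀ i, 0 < s i) :
    ∃ (m : ℕ) (G : SimpleGraph (Fin m)) (L : Fin m → Finset ℕ) (v : Fin n → Fin m),
      Function.Injective v ∧
      (∀ x, (L x).card = 3) ∧
      (∀ i, 1 ∈ L (v i)) ∧
      m < 11 * n * (t + 2) ∧
      (∀ R : Finset (Fin n),
        (∃ φ : Fin m → ℕ, IsLColoring G L φ ∧ ∀ i, φ (v i) = 1 ↔ i ∈ R) ↔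
          ∑ i ∈ R, s i ≤ t) ∧
      (∀ w : Fin m → ℕ → ℝ, (∀ x c, 0 ≤ w x c) → (∀ i, w (v i) 1 = 0) →
        WEpsSat G L w (1 / 4)) := by
  let e : (Fin n × Fin (t+1) × Fin 6) ≃ Fin (Fintype.card (Fin n × Fin (t+1) × Fin 6)) :=
    Fintype.equivFin _
  refine ⟨_, (GG n t s).comap e.symm, fun x => LL n t (e.symm x), fun i => e (i,0,0), ?_, ?_, ?_,
    ?_, ?_, ?_⟩
  · intro i j h
    simpa using h
  · intro x
    simp only [LL]
    split_ifs
    · rfl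
    · rw [Finset.card_eq_three]
      exact ⟨_, _, _, by omega, by omega, by omega, rfl⟩
  · intro i
    simp [LL]
  · simp
    nlinarith
  · intro R
    constructor
    · rintro ⟨φ, ⟨h1, h2⟩, h3⟩
      refine forward s R hs (fun x => φ (e x)) ⟨?_, ?_⟩ h3
      · intro x; simpa using h1 (e x)
      · intro x y h; exact h2 (by simpa using h)
    · intro h
      obtain ⟨h1, h2⟩ := psi_ok s R hs h
      refine ⟨fun x => psi s R (e.symm x), ⟨fun x => h1 _, fun x y h => h2 h⟩, ?_⟩
      intro i
      simp [psi]
  · intro w h0 h1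
    obtain ⟨φ, ⟨ha, hb⟩, hc⟩ := flex s (fun x => w (e x)) (fun x c => h0 _ c) h1
    refine ⟨fun x => φ (e.symm x), ⟨fun x => ha _, fun x y h => hb h⟩, ?_⟩
    unfold WeightTotal at *
    rw [← e.sum_comp, ← e.sum_comp]
    simpa using hc
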